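/- A category enriched in k-vector spaces is Krull–Schmidt (every object decomposes uniquely as a finite direct sum of objects with local endomorphism rings) if and only if all idempotents split, assuming all hom spaces are finite dimensional and the category is additive. -/

import Mathlib

open CategoryTheory CategoryTheory.Limits

/-- A category is Krull–Schmidt if every object decomposes as a finite direct sum
of objects with local endomorphism rings, and such decompositions are unique up
to permutation and isomorphism of the summands. -/
def IsKrullSchmidt (C : Type*) [Category C] [Preadditive C] [HasFiniteBiproducts C] :
    Prop :=
  (∀ x : C, ∃ (n : ℕ) (f : Fin n → C),
      (∀ i, IsLocalRing (End (f i))) ∧ Nonempty (x ≅ biproduct f)) ∧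
  (∀ (r s : ℕ) (f : Fin r → C) (g : Fin s → C),
      (∀ i, IsLocalRing (End (f i))) → (∀ j, IsLocalRing (End (g j))) →
      Nonempty (biproduct f ≅ biproduct g) →
      ∃ (h : r = s) (σ : Equiv.Perm (Fin r)),
        ∀ i, Nonempty (f i ≅ g (Fin.cast h (σ i))))

section Algebra

open Polynomial in
/-- Fitting's lemma for an element of a finite-dimensional algebra: there is an idempotent
detecting whether the element is invertible or nilpotent. -/
theorem exists_isIdempotentElem_fitting (k : Type*) {A : Type*} [Field k] [Ring A] [Algebra k A]
    [FiniteDimensional k A] (a : A) :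
    ∃ e : A, IsIdempotentElem e ∧ (e = 0 → IsUnit a) ∧ (e = 1 → IsNilpotent a) := by
  have hp : minpoly k a ≠ 0 := minpoly.ne_zero (Algebra.IsIntegral.isIntegral a)
  obtain ⟨q, hq, hndvd⟩ := exists_eq_pow_rootMultiplicity_mul_and_not_dvd (minpoly k a) hp 0
  set m := rootMultiplicity 0 (minpoly k a)
  rw [C_0, sub_zero] at hq hndvd
  have haq : aeval a (X ^ m * q) = 0 := by rw [← hq, minpoly.aeval]
  obtain ⟨u, v, huv⟩ : IsCoprime (X ^ (m + 1)) q :=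
    ((irreducible_X (R := k)).coprime_iff_not_dvd.mpr hndvd).pow_left
  have hsum : aeval a (u * X ^ (m + 1)) + aeval a (v * q) = 1 := by
    rw [← map_add, huv, map_one]
  refine ⟨aeval a (v * q), ?_, fun h => ?_, fun h => ⟨m + 1, ?_⟩⟩
  · have : aeval a (v * q) * aeval a (u * X ^ (m + 1)) = 0 := by
      rw [← map_mul, show v * q * (u * X ^ (m + 1)) = v * u * X * (X ^ m * q) by ring, map_mul,
        haq, mul_zero]
    rw [IsIdempotentElem]
    conv_rhs => rw [← mul_one (aeval a (v * q)), ← hsum, mul_add, this, zero_add]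
  · rw [h, add_zero] at hsum
    refine isUnit_iff_exists.mpr ⟨aeval a (u * X ^ m), ?_, ?_⟩
    · rw [← hsum, show u * X ^ (m + 1) = X * (u * X ^ m) by ring, map_mul (aeval a) X, aeval_X]
    · rw [← hsum, show u * X ^ (m + 1) = u * X ^ m * X by ring, map_mul (aeval a) _ X, aeval_X]
  · calc a ^ (m + 1) = aeval a (X ^ (m + 1)) * aeval a (v * q) := by simp [h]
      _ = 0 := by
        rw [← map_mul, show X ^ (m + 1) * (v * q) = v * X * (X ^ m * q) by ring, map_mul, haq,
          mul_zero]

/-- A nontrivial finite-dimensional algebra with only the trivial idempotents is local. -/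
theorem IsLocalRing.of_isIdempotentElem (k : Type*) {A : Type*} [Field k] [Ring A] [Algebra k A]
    [FiniteDimensional k A] [Nontrivial A] (h : ∀ e : A, IsIdempotentElem e → e = 0 ∨ e = 1) :
    IsLocalRing A where
  isUnit_or_isUnit_of_add_one {a b} hab := by
    obtain ⟨e, he, h0, h1⟩ := exists_isIdempotentElem_fitting k a
    refine (h e he).imp h0 fun he1 => ?_
    rw [← eq_sub_iff_add_eq'] at hab
    exact hab ▸ (h1 he1).isUnit_one_sub

theorem IsLocalRing.eq_zero_or_one_of_isIdempotentElem {A : Type*} [Ring A] [IsLocalRing A]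
    {e : A} (he : IsIdempotentElem e) : e = 0 ∨ e = 1 := by
  rcases isUnit_or_isUnit_of_add_one (add_sub_cancel e 1) with h | h
  · exact Or.inr (h.mul_left_cancel (by rw [he.eq, mul_one]))
  · exact Or.inl (h.mul_left_cancel (by rw [sub_mul, one_mul, he.eq, sub_self, mul_zero]))

/-- If a finite sum equals a unit in a local ring, then some summand is a unit. -/
theorem IsLocalRing.exists_isUnit_of_sum_eq_one {A : Type*} [Ring A] [IsLocalRing A]
    {n : ℕ} {f : Fin n → A} (h : ∑ i, f i = 1) : ∃ i, IsUnit (f i) := by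
  suffices H : ∀ (n : ℕ) (f : Fin n → A), IsUnit (∑ i, f i) → ∃ i, IsUnit (f i) from
    H n f (h ▸ isUnit_one)
  intro n
  induction n with
  | zero => intro f hf; simp at hf
  | succ n ih =>
    rintro f ⟨u, hu⟩
    rw [Fin.sum_univ_succ] at hu
    have hu' : ↑u⁻¹ * f 0 + ↑u⁻¹ * ∑ i : Fin n, f i.succ = 1 := by
      rw [← mul_add, ← hu, Units.inv_mul]
    rcases isUnit_or_isUnit_of_add_one hu' with h | h
    · exact ⟨0, (Units.isUnit_units_mul _ _).mp h⟩
    · obtain ⟨i, hi⟩ := ih _ ((Units.isUnit_units_mul _ _).mp h)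
      exact ⟨i.succ, hi⟩

end Algebra

section Category

variable {C : Type*} [Category C]

/-- Every idempotent endomorphism of `X` splits. -/
def IdempotentsSplit (X : C) : Prop :=
  ∀ p : X ⟶ X, p ≫ p = p → ∃ (Y : C) (i : Y ⟶ X) (e : X ⟶ Y), i ≫ e = 𝟙 Y ∧ e ≫ i = p

theorem IdempotentsSplit.of_iso {X Y : C} (φ : X ≅ Y) (h : IdempotentsSplit X) :
    IdempotentsSplit Y := by
  intro p hp
  obtain ⟨Z, i, r, hir, hri⟩ := h (φ.hom ≫ p ≫ φ.inv) (by simp [reassoc_of% hp])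
  refine ⟨Z, i ≫ φ.hom, φ.inv ≫ r, by simp [hir], ?_⟩
  rw [Category.assoc, reassoc_of% hri]
  simp

variable [Preadditive C]

/-- A morphism to an object with local endomorphism ring which is the first half of an
isomorphism is itself an isomorphism. -/
theorem isIso_of_isIso_comp_of_isLocalRing {X Y : C} [IsLocalRing (End Y)] [Nontrivial (End X)]
    (a : X ⟶ Y) (b : Y ⟶ X) [IsIso (a ≫ b)] : IsIso a := by
  have hr : a ≫ b ≫ inv (a ≫ b) = 𝟙 X := by rw [← Category.assoc, IsIso.hom_inv_id]
  have he : IsIdempotentElem (M := End Y) ((b ≫ inv (a ≫ b)) ≫ a) := by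
    change ((b ≫ inv (a ≫ b)) ≫ a) ≫ ((b ≫ inv (a ≫ b)) ≫ a) = _
    simp only [Category.assoc, reassoc_of% hr]
  rcases IsLocalRing.eq_zero_or_one_of_isIdempotentElem he with h | h
  · change (b ≫ inv (a ≫ b)) ≫ a = 0 at h
    refine absurd ?_ (one_ne_zero (α := End X))
    change 𝟙 X = 0
    calc 𝟙 X = a ≫ ((b ≫ inv (a ≫ b)) ≫ a) ≫ b ≫ inv (a ≫ b) := by
          simp only [Category.assoc, hr, Category.comp_id]
      _ = 0 := by rw [h, zero_comp, comp_zero]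
  · exact ⟨b ≫ inv (a ≫ b), hr, h⟩

/-- If the idempotents of `X` split, then so do those idempotents of `L ⊞ X` which are orthogonal
to a retraction onto `L` whose section has invertible component `L ⟶ L`. -/
theorem IdempotentsSplit.exists_of_orthogonal [HasBinaryBiproducts C] {L X : C}
    (h : IdempotentsSplit X) (p : L ⟶ L ⊞ X) (q : L ⊞ X ⟶ L) (hpq : p ≫ q = 𝟙 L)
    [IsIso (p ≫ biprod.fst)] (e : L ⊞ X ⟶ L ⊞ X) (he : e ≫ e = e)
    (hqe : p ≫ e = 0) (heq : e ≫ q = 0) :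
    ∃ (Y : C) (i : Y ⟶ L ⊞ X) (r : L ⊞ X ⟶ Y), i ≫ r = 𝟙 Y ∧ r ≫ i = e := by
  let a : X ⟶ L ⊞ X := biprod.inr ≫ (𝟙 _ - q ≫ p)
  let P : L ⊞ X ⟶ L ⊞ X := 𝟙 _ - biprod.fst ≫ inv (p ≫ biprod.fst) ≫ p
  let b : L ⊞ X ⟶ X := P ≫ biprod.snd
  have hpP : p ≫ P = 0 := by
    simp only [P, Preadditive.comp_sub, Category.comp_id]
    rw [← Category.assoc, IsIso.hom_inv_id_assoc, sub_self]
  have hPfst : P ≫ biprod.fst = 0 := by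
    simp [P, Preadditive.sub_comp]
  have hPp : P ≫ (𝟙 _ - q ≫ p) = 𝟙 _ - q ≫ p := by
    simp [P, Preadditive.sub_comp, Preadditive.comp_sub, reassoc_of% hpq]
  have hpP' : (𝟙 _ - q ≫ p) ≫ P = P := by
    rw [Preadditive.sub_comp, Category.assoc, hpP, comp_zero, sub_zero, Category.id_comp]
  have hPinr : biprod.inr ≫ P = biprod.inr := by
    simp [P, Preadditive.comp_sub]
  have hab : a ≫ b = 𝟙 X := by
    simp only [a, b, Category.assoc]
    rw [reassoc_of% hpP', reassoc_of% hPinr, biprod.inr_snd]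
  have hP : P ≫ biprod.snd ≫ biprod.inr = P := by
    conv_rhs => rw [← Category.comp_id P, ← biprod.total, Preadditive.comp_add,
      reassoc_of% hPfst, zero_comp, zero_add]
  have hba : b ≫ a = 𝟙 _ - q ≫ p := by
    simp only [a, b, Category.assoc]
    rw [reassoc_of% hP, hPp]
  have hbae : (b ≫ a) ≫ e = e := by
    rw [hba, Preadditive.sub_comp, Category.assoc, hqe, comp_zero, sub_zero, Category.id_comp]
  have heba : e ≫ (b ≫ a) = e := by
    rw [hba, Preadditive.comp_sub, reassoc_of% heq, zero_comp, sub_zero, Category.comp_id]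
  obtain ⟨Y, i, r, hir, hri⟩ := h (a ≫ e ≫ b) (by
    simp only [Category.assoc] at hbae heba ⊢
    rw [reassoc_of% hbae, reassoc_of% he])
  refine ⟨Y, i ≫ a, b ≫ r, by simp only [Category.assoc, reassoc_of% hab, hir], ?_⟩
  simp only [Category.assoc] at hbae heba ⊢
  rw [reassoc_of% hri, heba, hbae]

theorem IdempotentsSplit.biprod_of_isLocalRing [HasBinaryBiproducts C] {L X : C}
    [IsLocalRing (End L)] (h : IdempotentsSplit X) : IdempotentsSplit (L ⊞ X) := by
  intro e he
  have retraction (d : L ⊞ X ⟶ L ⊞ X) (hd : d ≫ d = d)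
      (hu : IsIso (biprod.inl ≫ d ≫ biprod.fst)) :
      (biprod.inl ≫ d) ≫ d ≫ biprod.fst ≫ inv (biprod.inl ≫ d ≫ biprod.fst) = 𝟙 L := by
    rw [Category.assoc, reassoc_of% hd]
    simpa only [Category.assoc] using IsIso.hom_inv_id (biprod.inl ≫ d ≫ biprod.fst)
  have hsum : (show End L from biprod.inl ≫ e ≫ biprod.fst) +
      (show End L from biprod.inl ≫ (𝟙 _ - e) ≫ biprod.fst) = 1 := by
    change biprod.inl ≫ e ≫ biprod.fst + biprod.inl ≫ (𝟙 _ - e) ≫ biprod.fst = 𝟙 L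
    simp [Preadditive.sub_comp, Preadditive.comp_sub]
  rcases IsLocalRing.isUnit_or_isUnit_of_add_one hsum with hu | hu
  · have hu : IsIso (biprod.inl ≫ e ≫ biprod.fst) := (isUnit_iff_isIso _).mp hu
    have hpq := retraction e he hu
    set p : L ⟶ L ⊞ X := biprod.inl ≫ e with hp
    set q : L ⊞ X ⟶ L := e ≫ biprod.fst ≫ inv (biprod.inl ≫ e ≫ biprod.fst) with hq
    have hpe : p ≫ e = p := by rw [hp, Category.assoc, he]
    have heq : e ≫ q = q := by rw [hq, reassoc_of% he]
    have : IsIso (p ≫ biprod.fst) := by rwa [hp, Category.assoc]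
    have hp0 : p ≫ (e - q ≫ p) = 0 := by
      rw [Preadditive.comp_sub, hpe, reassoc_of% hpq, sub_self]
    have hq0 : (e - q ≫ p) ≫ q = 0 := by
      rw [Preadditive.sub_comp, heq, Category.assoc, hpq, Category.comp_id, sub_self]
    have hidem : (e - q ≫ p) ≫ (e - q ≫ p) = e - q ≫ p := by
      rw [Preadditive.comp_sub, reassoc_of% hq0, zero_comp, sub_zero, Preadditive.sub_comp, he,
        Category.assoc, hpe]
    obtain ⟨Y, i, r, hir, hri⟩ := h.exists_of_orthogonal p q hpq (e - q ≫ p) hidem hp0 hq0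
    have hpr : p ≫ r = 0 := by
      rw [← Category.comp_id r, ← hir, reassoc_of% hri, reassoc_of% hp0, zero_comp]
    have hiq : i ≫ q = 0 := by
      rw [← Category.id_comp i, ← hir, Category.assoc, Category.assoc, reassoc_of% hri, hq0,
        comp_zero]
    refine ⟨L ⊞ Y, biprod.desc p i, biprod.lift q r, ?_, ?_⟩
    · ext <;> simp [hpq, hpr, hiq, hir]
    · rw [biprod.lift_desc, hri, add_sub_cancel]
  · have hu : IsIso (biprod.inl ≫ (𝟙 _ - e) ≫ biprod.fst) := (isUnit_iff_isIso _).mp hu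
    have hpq := retraction (𝟙 _ - e) (by simp [Preadditive.sub_comp, Preadditive.comp_sub, he]) hu
    have : IsIso ((biprod.inl ≫ (𝟙 (L ⊞ X) - e)) ≫ biprod.fst) := by rwa [Category.assoc]
    refine h.exists_of_orthogonal _ _ hpq e he ?_ ?_
    · rw [Category.assoc, Preadditive.sub_comp, Category.id_comp, he, sub_self, comp_zero]
    · rw [← Category.assoc, Preadditive.comp_sub, Category.comp_id, he, sub_self, zero_comp]

/-- If `X` is a retract of `Y` along a morphism which is not an isomorphism, then `End X` has
smaller dimension than `End Y`. -/
theorem finrank_end_lt_of_retract (k : Type*) [Field k] [Linear k C] {X Y : C}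
    [FiniteDimensional k (Y ⟶ Y)] (i : X ⟶ Y) (r : Y ⟶ X) (hir : i ≫ r = 𝟙 X)
    (hri : r ≫ i ≠ 𝟙 Y) : Module.finrank k (X ⟶ X) < Module.finrank k (Y ⟶ Y) := by
  let T : (X ⟶ X) →ₗ[k] (Y ⟶ Y) := Linear.leftComp k Y r ∘ₗ Linear.rightComp k X i
  have hT (t : X ⟶ X) : T t = r ≫ t ≫ i := rfl
  have hinj : Function.Injective T := by
    intro s t hst
    have := congrArg (fun u => i ≫ u ≫ r) hst
    simpa [hT, reassoc_of% hir, hir] using this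
  rw [← LinearMap.finrank_range_of_inj hinj]
  refine Submodule.finrank_lt fun htop => hri ?_
  obtain ⟨t, ht⟩ := LinearMap.range_eq_top.mp htop (𝟙 Y)
  rw [hT] at ht
  calc r ≫ i = (r ≫ t ≫ i) ≫ r ≫ i := by rw [ht, Category.id_comp]
    _ = r ≫ t ≫ i := by simp only [Category.assoc, reassoc_of% hir]
    _ = 𝟙 Y := ht

variable [HasFiniteBiproducts C]

attribute [local instance] hasBinaryBiproducts_of_finite_biproducts

/-- Splitting off the `j`-th summand of a biproduct. -/
noncomputable def biproductSuccAboveIso {n : ℕ} (f : Fin (n + 1) → C) (j : Fin (n + 1)) :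
    ⨁ f ≅ f j ⊞ ⨁ fun i => f (j.succAbove i) where
  hom := biprod.lift (biproduct.π f j) (biproduct.lift fun i => biproduct.π f (j.succAbove i))
  inv := biprod.desc (biproduct.ι f j) (biproduct.desc fun i => biproduct.ι f (j.succAbove i))
  hom_inv_id := by
    rw [biprod.lift_desc, biproduct.lift_desc, ← biproduct.total, Fin.sum_univ_succAbove _ j]
  inv_hom_id := by
    apply biprod.hom_ext' <;> apply biprod.hom_ext
    · simp
    · apply biproduct.hom_ext
      intro i
      simp [biproduct.ι_π_ne f (Fin.succAbove_ne j i).symm]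
    · apply biproduct.hom_ext'
      intro i
      simp [biproduct.ι_π_ne f (Fin.succAbove_ne j i)]
    · apply biproduct.hom_ext'
      intro i
      apply biproduct.hom_ext
      intro i'
      by_cases hi : i = i'
      · subst hi
        simp
      · simp [biproduct.ι_π_ne _ hi,
          biproduct.ι_π_ne f (Fin.succAbove_right_injective.ne hi : j.succAbove i ≠ _)]

theorem isZero_biproduct_fin_zero (f : Fin 0 → C) : IsZero (⨁ f) := by
  rw [IsZero.iff_id_eq_zero, ← biproduct.total]
  simp

/-- `X` is a finite direct sum of objects with local endomorphism rings. -/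
def IsSumOfLocal (X : C) : Prop :=
  ∃ (n : ℕ) (f : Fin n → C), (∀ i, IsLocalRing (End (f i))) ∧ Nonempty (X ≅ ⨁ f)

namespace IsSumOfLocal

theorem of_iso {X Y : C} (φ : X ≅ Y) : IsSumOfLocal X → IsSumOfLocal Y := by
  rintro ⟨n, f, hf, ⟨ψ⟩⟩
  exact ⟨n, f, hf, ⟨φ.symm ≪≫ ψ⟩⟩

theorem of_isZero {X : C} (h : IsZero X) : IsSumOfLocal X :=
  ⟨0, Fin.elim0, fun i => i.elim0, ⟨h.iso (isZero_biproduct_fin_zero _)⟩⟩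

theorem local_biprod {L X : C} (hL : IsLocalRing (End L)) :
    IsSumOfLocal X → IsSumOfLocal (L ⊞ X) := by
  rintro ⟨n, f, hf, ⟨φ⟩⟩
  refine ⟨n + 1, Fin.cons L f, Fin.cases hL hf, ⟨?_⟩⟩
  exact biprod.mapIso (Iso.refl L) φ ≪≫
    (biproductSuccAboveIso (Fin.cons L f : Fin (n + 1) → C) 0).symm

theorem induction {P : C → Prop} (iso : ∀ {X Y : C}, (X ≅ Y) → P X → P Y)
    (zero : ∀ X : C, IsZero X → P X)
    (biprod : ∀ L X : C, IsLocalRing (End L) → P X → P (L ⊞ X)) {X : C} :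
    IsSumOfLocal X → P X := by
  rintro ⟨n, f, hf, ⟨φ⟩⟩
  refine iso φ.symm ?_
  clear φ
  induction n with
  | zero => exact zero _ (isZero_biproduct_fin_zero f)
  | succ n ih =>
    exact iso (biproductSuccAboveIso f 0).symm (biprod _ _ (hf 0) (ih _ fun i => hf _))

theorem biprod {X Y : C} (hX : IsSumOfLocal X) (hY : IsSumOfLocal Y) :
    IsSumOfLocal (X ⊞ Y) := by
  refine hX.induction (P := fun X => IsSumOfLocal (X ⊞ Y))
    (fun φ => of_iso (biprod.mapIso φ (Iso.refl Y))) (fun X h => ?_) (fun L X hL h => ?_)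
  · exact hY.of_iso ⟨biprod.inr, biprod.snd, biprod.inr_snd,
      biprod.hom_ext' _ _ (h.eq_of_src _ _) (by simp)⟩
  · exact (h.local_biprod hL).of_iso (biprod.associator L X Y).symm

theorem idempotentsSplit {X : C} (hX : IsSumOfLocal X) : IdempotentsSplit X := by
  refine hX.induction IdempotentsSplit.of_iso (fun X h p _ => ?_) (fun L X _ h => ?_)
  · exact ⟨X, 𝟙 X, 𝟙 X, Category.comp_id _, h.eq_of_src _ _⟩
  · exact h.biprod_of_isLocalRing

end IsSumOfLocal

/-- Objects of a category with finite-dimensional morphism spaces and split idempotents are finite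
direct sums of objects with local endomorphism rings. -/
theorem IsSumOfLocal.of_isIdempotentComplete (k : Type*) [Field k] [Linear k C]
    [∀ x y : C, FiniteDimensional k (x ⟶ y)] [IsIdempotentComplete C] (X : C) :
    IsSumOfLocal X := by
  induction hn : Module.finrank k (X ⟶ X) using Nat.strong_induction_on generalizing X with
  | _ n ih =>
  subst hn
  by_cases hX : IsZero X
  · exact of_isZero hX
  have : Nontrivial (End X) :=
    ⟨𝟙 X, 0, fun h => hX ((IsZero.iff_id_eq_zero X).mpr h)⟩
  have : FiniteDimensional k (End X) := inferInstanceAs (FiniteDimensional k (X ⟶ X))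
  by_cases hloc : IsLocalRing (End X)
  · have hz : IsZero (⨁ (Fin.elim0 : Fin 0 → C)) := isZero_biproduct_fin_zero _
    exact ((of_isZero hz).local_biprod hloc).of_iso
      ⟨biprod.fst, biprod.inl, biprod.hom_ext' _ _ (by simp) (hz.eq_of_src _ _), biprod.inl_fst⟩
  obtain ⟨e, he, he0, he1⟩ : ∃ e : X ⟶ X, e ≫ e = e ∧ e ≠ 0 ∧ e ≠ 𝟙 X := by
    by_contra! H
    exact hloc (IsLocalRing.of_isIdempotentElem k fun e he => or_iff_not_imp_left.mpr (H e he))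
  obtain ⟨Y, i, r, hir, hri⟩ := IsIdempotentComplete.idempotents_split X e he
  obtain ⟨Z, j, s, hjs, hsj⟩ := IsIdempotentComplete.idempotents_split X (𝟙 X - e)
    (by simp [Preadditive.sub_comp, Preadditive.comp_sub, he])
  have hY := ih _ (finrank_end_lt_of_retract k i r hir (hri ▸ he1)) Y rfl
  have hZ := ih _ (finrank_end_lt_of_retract k j s hjs (by simpa [hsj] using he0)) Z rfl
  have his : i ≫ s = 0 := by
    rw [← Category.id_comp i, ← hir, ← Category.comp_id s, ← hjs]
    simp [reassoc_of% hri, reassoc_of% hsj, Preadditive.comp_sub, Preadditive.sub_comp,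
      reassoc_of% he]
  have hjr : j ≫ r = 0 := by
    rw [← Category.id_comp j, ← hjs, ← Category.comp_id r, ← hir]
    simp [reassoc_of% hri, reassoc_of% hsj, Preadditive.sub_comp, reassoc_of% he]
  refine (hY.biprod hZ).of_iso ⟨biprod.desc i j, biprod.lift r s, ?_, ?_⟩
  · ext <;> simp [hir, hjs, his, hjr]
  · rw [biprod.lift_desc, hri, hsj, add_sub_cancel]

/-- The Krull–Schmidt–Azumaya theorem: decompositions into objects with local endomorphism rings
are unique up to permutation and isomorphism. -/
theorem exists_equiv_of_biproduct_iso {r s : ℕ} (f : Fin r → C) (g : Fin s → C)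
    (hf : ∀ i, IsLocalRing (End (f i))) (hg : ∀ j, IsLocalRing (End (g j)))
    (φ : ⨁ f ≅ ⨁ g) : ∃ σ : Fin r ≃ Fin s, ∀ i, Nonempty (f i ≅ g (σ i)) := by
  induction r generalizing s with
  | zero =>
    have hz : IsZero (⨁ g) := (isZero_biproduct_fin_zero f).of_iso φ.symm
    have : IsEmpty (Fin s) := ⟨fun j => by
      have := hg j
      refine one_ne_zero (α := End (g j)) ?_
      change 𝟙 (g j) = 0
      rw [← biproduct.ι_π_self, hz.eq_of_tgt (biproduct.ι g j) 0, zero_comp]⟩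
    exact ⟨Equiv.equivOfIsEmpty _ _, fun i => i.elim0⟩
  | succ r ih =>
    have := hf 0
    let a (j : Fin s) : f 0 ⟶ g j := biproduct.ι f 0 ≫ φ.hom ≫ biproduct.π g j
    let b (j : Fin s) : g j ⟶ f 0 := biproduct.ι g j ≫ φ.inv ≫ biproduct.π f 0
    have hsum : ∑ j, (show End (f 0) from a j ≫ b j) = 1 := by
      change ∑ j, a j ≫ b j = 𝟙 (f 0)
      calc ∑ j, a j ≫ b j = biproduct.ι f 0 ≫ φ.hom ≫ (∑ j, biproduct.π g j ≫ biproduct.ι g j) ≫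
            φ.inv ≫ biproduct.π f 0 := by
            simp only [a, b, Preadditive.comp_sum, Preadditive.sum_comp, Category.assoc]
        _ = 𝟙 (f 0) := by simp
    obtain ⟨j, hj⟩ := IsLocalRing.exists_isUnit_of_sum_eq_one hsum
    have : IsIso (a j ≫ b j) := (isUnit_iff_isIso _).mp hj
    have := hg j
    have haj : IsIso (a j) := isIso_of_isIso_comp_of_isLocalRing (a j) (b j)
    obtain _ | s := s
    · exact j.elim0
    let ψ := (biproductSuccAboveIso f 0).symm ≪≫ φ ≪≫ biproductSuccAboveIso g j
    have : IsIso (biprod.inl ≫ ψ.hom ≫ biprod.fst) := by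
      have : biprod.inl ≫ ψ.hom ≫ biprod.fst = a j := by
        simp only [ψ, a, biproductSuccAboveIso, Iso.trans_hom, Iso.symm_hom, Category.assoc,
          biprod.lift_fst, biprod.inl_desc_assoc]
      rwa [this]
    obtain ⟨σ, hσ⟩ := ih _ _ (fun i => hf _) (fun i => hg _) (Biprod.isoElim ψ)
    refine ⟨((finSuccEquiv r).trans σ.optionCongr).trans (finSuccEquiv' j).symm,
      Fin.cases ?_ fun i => ?_⟩
    · simpa using ⟨asIso (a j)⟩
    · simpa using hσ i

end Category

/-- An additive category enriched in finite-dimensional `k`-vector spaces is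
Krull–Schmidt if and only if all idempotents split. -/
theorem krullSchmidt_iff_idempotentComplete
    (k : Type*) [Field k] (C : Type*) [Category C] [Preadditive C]
    [HasFiniteBiproducts C] [Linear k C]
    [∀ x y : C, FiniteDimensional k (x ⟶ y)] :
    IsKrullSchmidt C ↔ IsIdempotentComplete C := by
  refine ⟨fun h => ⟨fun X => IsSumOfLocal.idempotentsSplit (h.1 X)⟩, fun _ =>
    ⟨IsSumOfLocal.of_isIdempotentComplete k, ?_⟩⟩
  rintro r s f g hf hg ⟨φ⟩
  obtain ⟨σ, hσ⟩ := exists_equiv_of_biproduct_iso f g hf hg φ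
  obtain rfl : r = s := by simpa using Fintype.card_congr σ
  exact ⟨rfl, σ, hσ⟩
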